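/- arXiv:1702.03921 — 2 statements merged into one kernel-verified Lean document; each statement's English description precedes it below -/
import Mathlib

section
/- For every width D > 0 and all positive integers j ≠ q, the integral over ρ from -D/2 to D/2 of (2ρ + D)·y_j(ρ)·y_q'(ρ) dρ equals -4jq·(-1)^{j+q}/(j^2 − q^2), where y_q' denotes the derivative of y_q with respect to ρ. -/
/-- The Dirichlet eigenfunction `y_j(ρ) = sqrt(2/D) sin( ((2ρ+D)/2) · (πj/D) )`
of a waveguide of width `D`. -/
noncomputable def waveguideEigenfunction (D : ℝ) (j : ℕ) (ρ : ℝ) : ℝ :=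
  Real.sqrt (2 / D) * Real.sin ((2 * ρ + D) / 2 * (Real.pi * j / D))

theorem hasDerivAt_waveguideEigenfunction (D : ℝ) (j : ℕ) (ρ : ℝ) :
    HasDerivAt (waveguideEigenfunction D j)
      (Real.sqrt (2 / D) * (Real.pi * j / D) *
        Real.cos ((2 * ρ + D) / 2 * (Real.pi * j / D))) ρ := by
  have h : HasDerivAt (fun x : ℝ => (2 * x + D) / 2 * (Real.pi * j / D)) (Real.pi * j / D) ρ := by
    refine (((((hasDerivAt_id ρ).const_mul 2).add_const D).div_const 2).mul_const
      (Real.pi * j / D)).congr_deriv ?_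
    ring
  refine (h.sin.const_mul (Real.sqrt (2 / D))).congr_deriv ?_
  ring

theorem integral_mul_sin_const_mul {c : ℝ} (hc : c ≠ 0) (L : ℝ) :
    ∫ x in (0 : ℝ)..L, x * Real.sin (c * x) =
      Real.sin (c * L) / c ^ 2 - L * Real.cos (c * L) / c := by
  have hF (x : ℝ) : HasDerivAt
      (fun x => Real.sin (c * x) / c ^ 2 - x * Real.cos (c * x) / c)
      (x * Real.sin (c * x)) x := by
    have hx : HasDerivAt (fun x : ℝ => c * x) c x := by
      simpa using (hasDerivAt_id x).const_mul c
    refine ((hx.sin.div_const (c ^ 2)).sub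
      (((hasDerivAt_id x).mul hx.cos).div_const c)).congr_deriv ?_
    simp only [id]
    field_simp
    ring
  rw [intervalIntegral.integral_eq_sub_of_hasDerivAt (fun x _ => hF x)
    ((by fun_prop : Continuous fun x : ℝ => x * Real.sin (c * x)).intervalIntegrable _ _)]
  simp

/-- `∫_{-D/2}^{D/2} (2ρ + D) y_j(ρ) y_q'(ρ) dρ = -4jq(-1)^{j+q}/(j² − q²)` for `j ≠ q`. -/
theorem integral_weighted_mul_deriv_other (D : ℝ) (hD : 0 < D)
    (j q : ℕ) (hj : 0 < j) (hq : 0 < q) (hjq : j ≠ q) :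
    ∫ ρ in (-D / 2)..(D / 2),
        (2 * ρ + D) * waveguideEigenfunction D j ρ *
          deriv (waveguideEigenfunction D q) ρ
      = -(4 * (j : ℝ) * (q : ℝ) * (-1 : ℝ) ^ (j + q)) / ((j : ℝ) ^ 2 - (q : ℝ) ^ 2) := by
  have hsum : (j : ℝ) + q ≠ 0 := by positivity
  have hdiff : (j : ℝ) - q ≠ 0 := sub_ne_zero.mpr (by exact_mod_cast hjq)
  have hsq : (j : ℝ) ^ 2 - (q : ℝ) ^ 2 ≠ 0 := by
    rw [sq_sub_sq]
    exact mul_ne_zero hsum hdiff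
  have hπ := Real.pi_ne_zero
  have hD0 := hD.ne'
  set s : ℝ := Real.pi * (j + q) / D with hs
  set d : ℝ := Real.pi * (j - q) / D with hd
  have hs0 : s ≠ 0 := div_ne_zero (mul_ne_zero hπ hsum) hD0
  have hd0 : d ≠ 0 := div_ne_zero (mul_ne_zero hπ hdiff) hD0
  have hsD : s * D = j * Real.pi + q * Real.pi := by rw [hs]; field_simp
  have hdD : d * D = j * Real.pi - q * Real.pi := by rw [hd]; field_simp
  have hsqrt : Real.sqrt (2 / D) ^ 2 = 2 / D := Real.sq_sqrt (by positivity)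
  let g (x : ℝ) : ℝ :=
    2 / D * (Real.pi * q / D) * (x * Real.sin (s * x) + x * Real.sin (d * x))
  have hintegrand (ρ : ℝ) :
      (2 * ρ + D) * waveguideEigenfunction D j ρ * deriv (waveguideEigenfunction D q) ρ =
        g (ρ + D / 2) := by
    simp only [g]
    have hsx : s * (ρ + D / 2) = (2 * ρ + D) / 2 * (Real.pi * j / D) +
        (2 * ρ + D) / 2 * (Real.pi * q / D) := by rw [hs]; ring
    have hdx : d * (ρ + D / 2) = (2 * ρ + D) / 2 * (Real.pi * j / D) -
        (2 * ρ + D) / 2 * (Real.pi * q / D) := by rw [hd]; ring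
    rw [(hasDerivAt_waveguideEigenfunction D q ρ).deriv]
    simp only [waveguideEigenfunction]
    rw [hsx, hdx, Real.sin_add, Real.sin_sub]
    linear_combination (2 * ρ + D) * (Real.pi * q / D) *
      Real.sin ((2 * ρ + D) / 2 * (Real.pi * j / D)) *
      Real.cos ((2 * ρ + D) / 2 * (Real.pi * q / D)) * hsqrt
  have hint (c : ℝ) : IntervalIntegrable (fun x : ℝ => x * Real.sin (c * x))
      MeasureTheory.volume 0 D :=
    (by fun_prop : Continuous fun x : ℝ => x * Real.sin (c * x)).intervalIntegrable _ _
  rw [intervalIntegral.integral_congr fun ρ _ => hintegrand ρ,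
    intervalIntegral.integral_comp_add_right g, show -D / 2 + D / 2 = 0 by ring,
    show D / 2 + D / 2 = D by ring, intervalIntegral.integral_const_mul,
    intervalIntegral.integral_add (hint s) (hint d), integral_mul_sin_const_mul hs0,
    integral_mul_sin_const_mul hd0, hsD, hdD, Real.sin_add, Real.sin_sub, Real.cos_add,
    Real.cos_sub]
  simp only [Real.sin_nat_mul_pi, Real.cos_nat_mul_pi]
  rw [hs, hd, pow_add]
  field_simp
  ring
end

section
/- Let D: ℝ → ℝ be differentiable with D(z) > 0 for all z, and let j ≠ q be positive integers. Then for every z, the integral over ρ from -D(z)/2 to D(z)/2 of y_j(ρ,z)·∂_z y_q(ρ,z) dρ equals (D'(z)/D(z))·jq·((-1)^{j+q} + 1)/(j^2 − q^2). -/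
/-- The `z`-dependent Dirichlet eigenfunction
`y_j(ρ,z) = sqrt(2/D(z)) sin( ((2ρ+D(z))/2) · (πj/D(z)) )`
of a waveguide of slowly varying width `D(z)`. -/
noncomputable def waveguideEigenfunctionZ (D : ℝ → ℝ) (j : ℕ) (ρ z : ℝ) : ℝ :=
  Real.sqrt (2 / D z) * Real.sin ((2 * ρ + D z) / 2 * (Real.pi * j / D z))

/-- The `z`-derivative of the eigenfunction, at fixed `ρ`. -/
theorem hasDerivAt_waveguideEigenfunctionZ {D : ℝ → ℝ} {D' z : ℝ} (hD : HasDerivAt D D' z)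
    (hz : 0 < D z) (q : ℕ) (ρ : ℝ) :
    HasDerivAt (fun w => waveguideEigenfunctionZ D q ρ w)
      (-(D' / D z) * Real.sqrt (2 / D z) *
        (1 / 2 * Real.sin (Real.pi * q / D z * (ρ + D z / 2)) +
          Real.pi * q / D z * (ρ * Real.cos (Real.pi * q / D z * (ρ + D z / 2))))) z := by
  have hne : D z ≠ 0 := hz.ne'
  have hpos : 0 < 2 / D z := by positivity
  have hsqrt := ((hasDerivAt_const z (2 : ℝ)).div hD hne).sqrt hpos.ne'
  have hphase := (((hD.const_add (2 * ρ)).div_const 2).mul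
    ((hasDerivAt_const z (Real.pi * q)).div hD hne)).sin
  have harg : (2 * ρ + D z) / 2 * (Real.pi * q / D z) = Real.pi * q / D z * (ρ + D z / 2) := by
    ring
  refine (hsqrt.mul hphase).congr_deriv ?_
  simp only [Pi.mul_apply, Pi.div_apply, harg]
  have hs2 : Real.sqrt (2 / D z) ^ 2 = 2 / D z := Real.sq_sqrt hpos.le
  have hlog : (0 * D z - 2 * D') / D z ^ 2 / (2 * Real.sqrt (2 / D z)) =
      -(D' / D z) * Real.sqrt (2 / D z) * (1 / 2) := by
    rw [div_eq_iff (by positivity)]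
    linear_combination (D' / D z) * hs2
  rw [hlog]
  field_simp
  ring

/-- Orthogonality of two sines which both vanish at `±L/2`. -/
theorem integral_sin_mul_sin_of_sin_eq_zero {a b L : ℝ} (hab : a ^ 2 - b ^ 2 ≠ 0)
    (ha : Real.sin (a * L) = 0) (hb : Real.sin (b * L) = 0) :
    ∫ x in (-L / 2)..(L / 2), Real.sin (a * (x + L / 2)) * Real.sin (b * (x + L / 2)) = 0 := by
  have hlin (c x : ℝ) : HasDerivAt (fun x => c * (x + L / 2)) c x := by
    simpa using ((hasDerivAt_id x).add_const (L / 2)).const_mul c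
  have hderiv (x : ℝ) : HasDerivAt
      (fun x => (b * (Real.sin (a * (x + L / 2)) * Real.cos (b * (x + L / 2))) -
        a * (Real.cos (a * (x + L / 2)) * Real.sin (b * (x + L / 2)))) / (a ^ 2 - b ^ 2))
      (Real.sin (a * (x + L / 2)) * Real.sin (b * (x + L / 2))) x := by
    refine (((((hlin a x).sin.mul (hlin b x).cos).const_mul b).sub
      (((hlin a x).cos.mul (hlin b x).sin).const_mul a)).div_const _).congr_deriv ?_
    rw [div_eq_iff hab]
    ring
  rw [intervalIntegral.integral_eq_sub_of_hasDerivAt (fun x _ => hderiv x)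
    (Continuous.intervalIntegrable (by fun_prop) _ _)]
  have h0 : -L / 2 + L / 2 = 0 := by ring
  have h1 : L / 2 + L / 2 = L := by ring
  simp [h0, h1, ha, hb]

/-- First moment of `sin · cos` when both phases are multiples of `π` at the right endpoint. -/
theorem integral_id_mul_sin_mul_cos_of_sin_eq_zero {a b L : ℝ} (hab : a ^ 2 - b ^ 2 ≠ 0)
    (ha : Real.sin (a * L) = 0) (hb : Real.sin (b * L) = 0) :
    ∫ x in (-L / 2)..(L / 2),
        x * (Real.sin (a * (x + L / 2)) * Real.cos (b * (x + L / 2))) =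
      -(a * L / 2) * (Real.cos (a * L) * Real.cos (b * L) + 1) / (a ^ 2 - b ^ 2) := by
  have hlin (c x : ℝ) : HasDerivAt (fun x => c * (x + L / 2)) c x := by
    simpa using ((hasDerivAt_id x).add_const (L / 2)).const_mul c
  have hderiv (x : ℝ) : HasDerivAt
      (fun x => (-(x * (a * (Real.cos (a * (x + L / 2)) * Real.cos (b * (x + L / 2))) +
          b * (Real.sin (a * (x + L / 2)) * Real.sin (b * (x + L / 2))))) +
        ((a ^ 2 + b ^ 2) * (Real.sin (a * (x + L / 2)) * Real.cos (b * (x + L / 2))) -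
          2 * a * b * (Real.cos (a * (x + L / 2)) * Real.sin (b * (x + L / 2)))) /
            (a ^ 2 - b ^ 2)) / (a ^ 2 - b ^ 2))
      (x * (Real.sin (a * (x + L / 2)) * Real.cos (b * (x + L / 2)))) x := by
    have hsc := (hlin a x).sin.mul (hlin b x).cos
    have hcs := (hlin a x).cos.mul (hlin b x).sin
    have hcc := (hlin a x).cos.mul (hlin b x).cos
    have hss := (hlin a x).sin.mul (hlin b x).sin
    refine ((((hasDerivAt_id x).mul ((hcc.const_mul a).add (hss.const_mul b))).neg.add
      (((hsc.const_mul (a ^ 2 + b ^ 2)).sub (hcs.const_mul (2 * a * b))).div_const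
        (a ^ 2 - b ^ 2))).div_const (a ^ 2 - b ^ 2)).congr_deriv ?_
    simp only [Pi.add_apply, Pi.mul_apply, id]
    field_simp
    ring
  rw [intervalIntegral.integral_eq_sub_of_hasDerivAt (fun x _ => hderiv x)
    (Continuous.intervalIntegrable (by fun_prop) _ _)]
  have h0 : -L / 2 + L / 2 = 0 := by ring
  have h1 : L / 2 + L / 2 = L := by ring
  simp only [h0, h1, ha, hb, mul_zero, Real.sin_zero, Real.cos_zero]
  ring

/-- `∫_{-D(z)/2}^{D(z)/2} y_j(ρ,z) ∂_z y_q(ρ,z) dρ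
    = (D'(z)/D(z)) jq((-1)^{j+q} + 1)/(j² − q²)` for `j ≠ q`. -/
theorem integral_mul_partialZ_other (D : ℝ → ℝ) (hD : Differentiable ℝ D)
    (hDpos : ∀ z, 0 < D z) (j q : ℕ) (hj : 0 < j) (hq : 0 < q) (hjq : j ≠ q) (z : ℝ) :
    ∫ ρ in (-(D z) / 2)..(D z / 2),
        waveguideEigenfunctionZ D j ρ z *
          deriv (fun w => waveguideEigenfunctionZ D q ρ w) z
      = deriv D z / D z *
          ((j : ℝ) * (q : ℝ) * ((-1 : ℝ) ^ (j + q) + 1) / ((j : ℝ) ^ 2 - (q : ℝ) ^ 2)) := by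
  have hne : D z ≠ 0 := (hDpos z).ne'
  have hsq : (j : ℝ) ^ 2 - (q : ℝ) ^ 2 ≠ 0 := by
    rw [sub_ne_zero, Ne, sq_eq_sq₀ (by positivity) (by positivity)]
    exact_mod_cast hjq
  have hab_eq : (Real.pi * j / D z) ^ 2 - (Real.pi * q / D z) ^ 2 =
      (Real.pi / D z) ^ 2 * ((j : ℝ) ^ 2 - (q : ℝ) ^ 2) := by ring
  have hab : (Real.pi * j / D z) ^ 2 - (Real.pi * q / D z) ^ 2 ≠ 0 := by
    rw [hab_eq]
    exact mul_ne_zero (pow_ne_zero 2 (div_ne_zero Real.pi_ne_zero hne)) hsq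
  have hphase (n : ℕ) : Real.pi * n / D z * D z = n * Real.pi := by field_simp
  have hsin (n : ℕ) : Real.sin (Real.pi * n / D z * D z) = 0 := by
    rw [hphase, Real.sin_nat_mul_pi]
  have hcos (n : ℕ) : Real.cos (Real.pi * n / D z * D z) = (-1) ^ n := by
    rw [hphase, Real.cos_nat_mul_pi]
  have hs2 : Real.sqrt (2 / D z) * Real.sqrt (2 / D z) = 2 / D z :=
    Real.mul_self_sqrt (div_pos two_pos (hDpos z)).le
  have hintegrand (ρ : ℝ) :
      waveguideEigenfunctionZ D j ρ z * deriv (fun w => waveguideEigenfunctionZ D q ρ w) z =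
        -(deriv D z / D z ^ 2) * (Real.sin (Real.pi * j / D z * (ρ + D z / 2)) *
            Real.sin (Real.pi * q / D z * (ρ + D z / 2))) +
          -(2 * Real.pi * q * deriv D z / D z ^ 3) *
            (ρ * (Real.sin (Real.pi * j / D z * (ρ + D z / 2)) *
              Real.cos (Real.pi * q / D z * (ρ + D z / 2)))) := by
    rw [(hasDerivAt_waveguideEigenfunctionZ (hD z).hasDerivAt (hDpos z) q ρ).deriv,
      waveguideEigenfunctionZ, show (2 * ρ + D z) / 2 * (Real.pi * j / D z) =
        Real.pi * j / D z * (ρ + D z / 2) by ring]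
    linear_combination (-(deriv D z / D z) * Real.sin (Real.pi * j / D z * (ρ + D z / 2)) *
      (1 / 2 * Real.sin (Real.pi * q / D z * (ρ + D z / 2)) +
        Real.pi * q / D z * (ρ * Real.cos (Real.pi * q / D z * (ρ + D z / 2))))) * hs2
  simp only [hintegrand]
  rw [intervalIntegral.integral_add (Continuous.intervalIntegrable (by fun_prop) _ _)
      (Continuous.intervalIntegrable (by fun_prop) _ _),
    intervalIntegral.integral_const_mul, intervalIntegral.integral_const_mul,
    integral_sin_mul_sin_of_sin_eq_zero hab (hsin j) (hsin q),
    integral_id_mul_sin_mul_cos_of_sin_eq_zero hab (hsin j) (hsin q),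
    hcos, hcos, ← pow_add, hab_eq]
  field_simp
  ring
end
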